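/- Let γ : [a,b] → ℝ³ be a curve with constant speed C > 0 and |γ(t)| ≥ 1 for all t. Then the horizon of γ satisfies H(γ) = C·∫_a^b ∫_0^{2π} (1/|γ(t)|²)·| √(|γ(t)|² − 1)·sin(α(t))·cos θ + cos(α(t)) | dθ dt; equivalently, the efficiency satisfies E(γ) = (1/(b−a))·∫_a^b ∫_0^{2π} (1/|γ(t)|²)·| √(|γ(t)|² − 1)·sin(α(t))·cos θ + cos(α(t)) | dθ dt. -/

import Mathlib

open MeasureTheory Set Real
open scoped ENNReal NNReal RealInnerProductSpace

noncomputable section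

abbrev E3 := EuclideanSpace ℝ (Fin 3)
/-- The horizon of a curve: the measure, counted with multiplicity, of the set of points
`p` of the unit sphere whose tangent plane `{x : ⟨x,p⟩ = 1}` meets the curve. -/
def horizon (a b : ℝ) (γ : ℝ → E3) : ℝ≥0∞ :=
  ∫⁻ p : Metric.sphere (0 : E3) 1,
    ({t ∈ Set.Ico a b | ⟪γ t, (p : E3)⟫ = 1}.encard : ℝ≥0∞)
      ∂((volume : Measure E3).toSphere)

/-- The angle between the position vector `γ(t)` and the velocity `γ′(t)`. -/
def alpha (a b : ℝ) (γ : ℝ → E3) (t : ℝ) : ℝ :=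
  InnerProductGeometry.angle (γ t) (derivWithin γ (Set.Icc a b) t)


theorem exists_inj_const {E : Type*} [NormedAddCommGroup E] [NormedSpace ℝ E]
    [FiniteDimensional ℝ E] [Nontrivial E] (A : E →L[ℝ] E) :
    ∃ δ : ℝ≥0, δ ≠ 0 ∧ (A.det ≠ 0 → ∀ (f : E → E) (s : Set E),
      ApproximatesLinearOn f A s δ → InjOn f s) := by
  by_cases h : A.det = 0
  · exact ⟨1, one_ne_zero, fun h' => (h' h).elim⟩
  · let e := A.toContinuousLinearEquivOfDetNeZero h
    have he : (e : E →L[ℝ] E) = A := by ext; simp [e]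
    have hpos : 0 < ‖(e.symm : E →L[ℝ] E)‖₊ := by

      simpa using e.nnnorm_symm_pos
    refine ⟨‖(e.symm : E →L[ℝ] E)‖₊⁻¹ / 2, ?_, fun _ f s hf => ?_⟩
    · positivity
    · rw [← he] at hf
      exact hf.injOn (Or.inr (NNReal.half_lt_self (by positivity)))

theorem encard_iUnion_ennreal {α : Type*} (t : ℕ → Set α) (ht : Pairwise (Function.onFun Disjoint t)) :
    ((⋃ n, t n).encard : ℝ≥0∞) = ∑' n, ((t n).encard : ℝ≥0∞) := by
  let _ : MeasurableSpace α := ⊤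
  have h : ∀ s : Set α, Measure.count s = (s.encard : ℝ≥0∞) :=
    fun s => Measure.count_apply trivial
  simp_rw [← h]
  exact measure_iUnion ht (fun _ => trivial)

theorem encard_union_ennreal {α : Type*} (s t : Set α) (h : Disjoint s t) :
    ((s ∪ t).encard : ℝ≥0∞) = (s.encard : ℝ≥0∞) + (t.encard : ℝ≥0∞) := by
  rw [Set.encard_union_eq h, ENat.toENNReal_add]

theorem area_mult {E : Type*} [NormedAddCommGroup E] [NormedSpace ℝ E]
    [FiniteDimensional ℝ E] [Nontrivial E] [MeasurableSpace E] [BorelSpace E]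
    (μ : Measure E) [μ.IsAddHaarMeasure] (f : E → E) (f' : E → E →L[ℝ] E) (s : Set E)
    (hs : MeasurableSet s) (hf : ∀ x ∈ s, HasFDerivWithinAt f (f' x) s x) :
    AEMeasurable (fun y => ((s ∩ f ⁻¹' {y}).encard : ℝ≥0∞)) μ ∧
    ∫⁻ y, ((s ∩ f ⁻¹' {y}).encard : ℝ≥0∞) ∂μ = ∫⁻ x in s, ENNReal.ofReal |(f' x).det| ∂μ := by
  have hm : AEMeasurable (fun x => (f' x).det) (μ.restrict s) :=
    ContinuousLinearMap.continuous_det.measurable.comp_aemeasurable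
      (aemeasurable_fderivWithin μ hs hf)
  have hnull : NullMeasurableSet {x | (f' x).det ≠ 0} (μ.restrict s) :=
    (hm.nullMeasurable (measurableSet_singleton (0:ℝ)).compl)
  have hnull2 : NullMeasurableSet (s ∩ {x | (f' x).det ≠ 0}) μ := by
    have := (nullMeasurableSet_restrict hs.nullMeasurableSet).1 hnull
    rwa [inter_comm]
  obtain ⟨s1, hs1sub, hs1m, hs1ae⟩ := hnull2.exists_measurable_subset_ae_eq
  have hs1s : s1 ⊆ s := hs1sub.trans inter_subset_left
  have hbadnull : μ ((s ∩ {x | (f' x).det ≠ 0}) \ s1) = 0 := (ae_eq_set.1 hs1ae).2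
  have himg : μ (f '' (s \ s1)) = 0 := by
    have : s \ s1 ⊆ ((s ∩ {x | (f' x).det ≠ 0}) \ s1) ∪ (s ∩ {x | (f' x).det = 0}) := by
      intro x hx
      by_cases h : (f' x).det = 0
      · exact Or.inr ⟨hx.1, h⟩
      · exact Or.inl ⟨⟨hx.1, h⟩, hx.2⟩
    refine measure_mono_null (image_mono this) ?_
    rw [image_union]
    refine measure_union_null ?_ ?_
    · refine addHaar_image_eq_zero_of_differentiableOn_of_addHaar_eq_zero μ ?_ hbadnull
      intro x hx
      exact ((hf x hx.1.1).mono (diff_subset.trans inter_subset_left)).differentiableWithinAt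
    · refine addHaar_image_eq_zero_of_det_fderivWithin_eq_zero μ (f' := f') ?_ ?_
      · intro x hx
        exact (hf x hx.1).mono inter_subset_left
      · intro x hx
        exact hx.2
  have hae : ∀ᵐ y ∂μ, ((s ∩ f ⁻¹' {y}).encard : ℝ≥0∞) = ((s1 ∩ f ⁻¹' {y}).encard : ℝ≥0∞) := by
    have : ∀ᵐ y ∂μ, y ∉ f '' (s \ s1) := measure_eq_zero_iff_ae_notMem.1 himg
    filter_upwards [this] with y hy
    congr 2
    ext x
    constructor
    · rintro ⟨h1, h2⟩
      refine ⟨?_, h2⟩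
      by_contra h3
      exact hy ⟨x, ⟨h1, h3⟩, h2⟩
    · rintro ⟨h1, h2⟩
      exact ⟨hs1s h1, h2⟩
  have hint : ∫⁻ x in s, ENNReal.ofReal |(f' x).det| ∂μ
      = ∫⁻ x in s1, ENNReal.ofReal |(f' x).det| ∂μ := by
    have h1 : ∫⁻ x in s \ s1, ENNReal.ofReal |(f' x).det| ∂μ = 0 := by
      have : ∀ᵐ x ∂μ, x ∉ ((s ∩ {x | (f' x).det ≠ 0}) \ s1) := measure_eq_zero_iff_ae_notMem.1 hbadnull
      rw [setLIntegral_congr_fun_ae (g := fun _ => 0) (hs.diff hs1m)]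
      · simp
      · filter_upwards [this] with x hx hx2
        have : (f' x).det = 0 := by
          by_contra h
          exact hx ⟨⟨hx2.1, h⟩, hx2.2⟩
        simp [this]
    rw [← lintegral_inter_add_diff _ s hs1m, inter_eq_right.2 hs1s, h1, add_zero]
  have hf1 : ∀ x ∈ s1, HasFDerivWithinAt f (f' x) s1 x := fun x hx => (hf x (hs1s hx)).mono hs1s
  choose r hr0 hr using fun A : E →L[ℝ] E => exists_inj_const A
  obtain ⟨t, A, htd, htm, htc, hta, htA⟩ :=
    exists_partition_approximatesLinearOn_of_hasFDerivWithinAt f s1 f' hf1 r hr0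
  have hinj : ∀ n, InjOn f (s1 ∩ t n) := by
    intro n
    rcases s1.eq_empty_or_nonempty with h | h
    · simp [h]
    obtain ⟨y, hy, hAy⟩ := htA h n
    exact hr (A n) (by rw [hAy]; exact (hs1sub hy).2) f _ (hta n)
  have hfn : ∀ n, ∀ x ∈ s1 ∩ t n, HasFDerivWithinAt f (f' x) (s1 ∩ t n) x :=
    fun n x hx => (hf1 x hx.1).mono inter_subset_left
  have himeas : ∀ n, MeasurableSet (f '' (s1 ∩ t n)) := fun n =>
    measurable_image_of_fderivWithin (hs1m.inter (htm n)) (hfn n) (hinj n)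
  have hcount : ∀ y, ((s1 ∩ f ⁻¹' {y}).encard : ℝ≥0∞)
      = ∑' n, (f '' (s1 ∩ t n)).indicator (fun _ => (1 : ℝ≥0∞)) y := by
    intro y
    have h1 : s1 ∩ f ⁻¹' {y} = ⋃ n, (s1 ∩ t n) ∩ f ⁻¹' {y} := by
      rw [← iUnion_inter, ← inter_iUnion, inter_eq_left.2 htc]
    rw [h1, encard_iUnion_ennreal]
    · congr 1
      ext n
      by_cases hy : y ∈ f '' (s1 ∩ t n)
      · obtain ⟨x, hx, rfl⟩ := hy
        rw [indicator_of_mem (mem_image_of_mem f hx)]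
        have : s1 ∩ t n ∩ f ⁻¹' {f x} = {x} := by
          ext z
          constructor
          · rintro ⟨h1, h2⟩
            exact hinj n h1 hx h2
          · rintro rfl
            exact ⟨hx, rfl⟩
        rw [this]; simp
      · rw [indicator_of_notMem hy]
        have : s1 ∩ t n ∩ f ⁻¹' {y} = ∅ := by
          ext z
          simp only [mem_empty_iff_false, iff_false]
          rintro ⟨h1, h2⟩
          exact hy ⟨z, h1, h2⟩
        rw [this]; simp
    · intro i j hij
      exact (htd hij).mono (inter_subset_left.trans inter_subset_right)
        (inter_subset_left.trans inter_subset_right)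
  have hmeas : Measurable (fun y => ((s1 ∩ f ⁻¹' {y}).encard : ℝ≥0∞)) := by
    simp_rw [hcount]
    exact Measurable.ennreal_tsum fun n => measurable_const.indicator (himeas n)
  refine ⟨hmeas.aemeasurable.congr (hae.mono fun y hy => hy.symm), ?_⟩
  rw [lintegral_congr_ae hae, hint]
  simp_rw [hcount]
  rw [lintegral_tsum fun n => (measurable_const.indicator (himeas n)).aemeasurable]
  have : s1 = ⋃ n, s1 ∩ t n := by rw [← inter_iUnion, inter_eq_left.2 htc]
  conv_rhs => rw [this]
  rw [lintegral_iUnion (fun n => hs1m.inter (htm n))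
    (fun i j hij => (htd hij).mono inter_subset_right inter_subset_right)]
  congr 1
  ext n
  rw [lintegral_indicator (himeas n), lintegral_abs_det_fderiv_eq_addHaar_image μ
    (hs1m.inter (htm n)) (hfn n) (hinj n)]
  simp
theorem sphere_lintegral (h : E3 → ℝ≥0∞) (hh : ∀ r : ℝ, 0 < r → ∀ x, h (r • x) = h x)
    (hm : AEMeasurable ((Metric.ball (0:E3) 1 \ {0}).indicator h) volume) :
    ∫⁻ p : Metric.sphere (0 : E3) 1, h p ∂((volume : Measure E3).toSphere)
      = 3 * ∫⁻ x, (Metric.ball (0:E3) 1 \ {0}).indicator h x := by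
  set k := (Metric.ball (0:E3) 1 \ {0}).indicator h with hk
  have hmp := Measure.measurePreserving_homeomorphUnitSphereProd (volume : Measure E3)
  have hmp2 := hmp.symm (homeomorphUnitSphereProd E3).toMeasurableEquiv
  have h1 : ∫⁻ x, k x = ∫⁻ x : ({0}ᶜ : Set E3), k x ∂((volume : Measure E3).comap Subtype.val) := by
    rw [lintegral_subtype_comap (measurableSet_singleton _).compl]
    rw [restrict_compl_singleton]
  have h2 : ∫⁻ x : ({0}ᶜ : Set E3), k x ∂((volume : Measure E3).comap Subtype.val) =
      ∫⁻ z, k ((homeomorphUnitSphereProd E3).symm z)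
        ∂((volume : Measure E3).toSphere.prod (Measure.volumeIoiPow (Module.finrank ℝ E3 - 1))) := by
    exact (hmp2.lintegral_comp_emb
      ((homeomorphUnitSphereProd E3).symm.measurableEmbedding) (fun x : ({0}ᶜ : Set E3) => k x)).symm
  have h3 : AEMeasurable (fun z => k ((homeomorphUnitSphereProd E3).symm z))
      ((volume : Measure E3).toSphere.prod (Measure.volumeIoiPow (Module.finrank ℝ E3 - 1))) := by
    have h4 : AEMeasurable (fun x : ({0}ᶜ : Set E3) => k x) ((volume : Measure E3).comap Subtype.val) := by
      have := (aemeasurable_restrict_iff_comap_subtype (μ := (volume : Measure E3)) (f := k)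
        (measurableSet_singleton (0:E3)).compl).1 hm.restrict
      exact this
    exact AEMeasurable.comp_quasiMeasurePreserving h4 hmp2.quasiMeasurePreserving
  rw [h1, h2, lintegral_prod _ h3]
  have h5 : ∀ p : Metric.sphere (0 : E3) 1,
      ∫⁻ r, k ((homeomorphUnitSphereProd E3).symm (p, r))
        ∂(Measure.volumeIoiPow (Module.finrank ℝ E3 - 1)) = h p * 3⁻¹ := by
    intro p
    have : ∀ r : Ioi (0:ℝ), k ((homeomorphUnitSphereProd E3).symm (p, r))
        = (Iio (⟨1, mem_Ioi.2 one_pos⟩ : Ioi (0:ℝ))).indicator (fun _ => h p) r := by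
      intro r
      have hr : (0:ℝ) < r := r.2
      have hp : ‖(p : E3)‖ = 1 := by simp
      have hp0 : (p : E3) ≠ 0 := by
        intro h0; rw [h0] at hp; simp at hp
      have e1 : (((homeomorphUnitSphereProd E3).symm (p, r) : ({0}ᶜ : Set E3)) : E3)
          = (r : ℝ) • (p : E3) := by
        simp
      rw [e1, hk]
      by_cases hr1 : (r : ℝ) < 1
      · rw [indicator_of_mem, indicator_of_mem, hh _ hr]
        · exact hr1
        · refine ⟨?_, ?_⟩
          · simp [norm_smul, abs_of_pos hr, hp, hr1]
          · simp [hr.ne', hp0]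
      · rw [indicator_of_notMem, indicator_of_notMem]
        · exact hr1
        · intro h6
          have := h6.1
          simp [norm_smul, abs_of_pos hr, hp] at this
          exact hr1 this
    simp_rw [this]
    rw [lintegral_indicator measurableSet_Iio]
    simp only [lintegral_const, MeasurableSet.univ, Measure.restrict_apply, univ_inter]
    rw [Measure.volumeIoiPow_apply_Iio]
    congr 1
    simp
    norm_num
    rw [one_div, ENNReal.ofReal_inv_of_pos (by norm_num)]
    norm_num
  simp_rw [h5]
  rw [lintegral_mul_const' _ _ (by simp), mul_comm, mul_assoc, ENNReal.inv_mul_cancel] <;> simp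

theorem null_image (f : E3 → E3) (s : Set E3) (hs : volume s = 0)
    (hf : ∀ x ∈ s, ∃ K : ℝ≥0, ∃ U ∈ nhdsWithin x s, LipschitzOnWith K f U) :
    volume (f '' s) = 0 := by
  have hac : (volume : Measure E3) ≪ (Measure.hausdorffMeasure (Module.finrank ℝ E3 : ℝ)) :=
    Measure.absolutelyContinuous_isAddHaarMeasure _ _
  have hca : (Measure.hausdorffMeasure (Module.finrank ℝ E3 : ℝ)) ≪ (volume : Measure E3) :=
    Measure.absolutelyContinuous_isAddHaarMeasure _ _
  choose! K U hU hL using hf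
  obtain ⟨t, hts, htc, htU⟩ := TopologicalSpace.countable_cover_nhdsWithin (f := U) hU
  have : f '' s ⊆ ⋃ x ∈ t, f '' (s ∩ U x) := by
    rintro _ ⟨y, hy, rfl⟩
    obtain ⟨x, hx, hyx⟩ := mem_iUnion₂.1 (htU hy)
    exact mem_iUnion₂.2 ⟨x, hx, y, ⟨hy, hyx⟩, rfl⟩
  refine measure_mono_null this ((measure_biUnion_null_iff htc).2 fun x hx => ?_)
  apply hac
  have h1 := ((hL x (hts hx)).mono (inter_subset_right (s := s))).hausdorffMeasure_image_le
    (d := (Module.finrank ℝ E3 : ℝ)) (by positivity)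
  have h2 : (Measure.hausdorffMeasure (Module.finrank ℝ E3 : ℝ)) (s ∩ U x) = 0 :=
    measure_mono_null inter_subset_left (hca hs)
  rw [h2, mul_zero] at h1
  exact le_antisymm h1 bot_le
theorem speed_ae (a b : ℝ) (hab : a < b) (γ : ℝ → E3) (C : ℝ≥0)
    (hL : LipschitzWith C γ) (hspeed : HasConstantSpeedOnWith γ (Set.Icc a b) C) :
    ∀ᵐ t ∂(volume.restrict (Icc a b)), ‖deriv γ t‖ = C := by
  have hdiff : ∀ᵐ t, DifferentiableAt ℝ γ t := hL.ae_differentiableAt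
  have hle : ∀ t, ‖deriv γ t‖ ≤ C := fun t => norm_deriv_le_of_lipschitz hL
  have hmeas : Measurable (fun t => ‖deriv γ t‖) := (measurable_deriv γ).norm
  have hint : ∀ s t, IntervalIntegrable (fun t => ‖deriv γ t‖) volume s t := by
    intro s t
    refine (intervalIntegrable_const (c := (C : ℝ))).mono_fun hmeas.aestronglyMeasurable ?_
    refine Filter.Eventually.of_forall fun x => ?_
    simpa using hle x
  have key : ∀ s t, s ≤ t → ‖γ t - γ s‖ ≤ ∫ x in s..t, ‖deriv γ x‖ := by
    intro s t hst
    set u := γ t - γ s with hu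
    have hφL : LipschitzWith (‖u‖₊ * C) (fun x => ⟪u, γ x⟫) := by
      have := (innerSL ℝ u).lipschitz.comp hL
      have h2 : ‖innerSL ℝ u‖₊ = ‖u‖₊ := by ext; simp
      rw [h2] at this
      exact this
    have hac := (hφL.lipschitzOnWith (s := uIcc s t)).absolutelyContinuousOnInterval
    have h1 := hac.integral_deriv_eq_sub
    have h2 : ∫ x in s..t, deriv (fun x => ⟪u, γ x⟫) x ≤ ∫ x in s..t, ‖u‖ * ‖deriv γ x‖ := by
      refine intervalIntegral.integral_mono_ae hst hac.intervalIntegrable_deriv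
        ((hint s t).const_mul _) ?_
      filter_upwards [hdiff] with x hx
      have : HasDerivAt (fun x => ⟪u, γ x⟫) ⟪u, deriv γ x⟫ x :=
        (innerSL ℝ u).hasFDerivAt.comp_hasDerivAt x hx.hasDerivAt
      rw [this.deriv]
      exact real_inner_le_norm _ _
    rw [h1, ← inner_sub_right, ← hu, real_inner_self_eq_norm_mul_norm,
      intervalIntegral.integral_const_mul] at h2
    rcases (norm_nonneg u).eq_or_lt with h | h
    · rw [← h]
      exact intervalIntegral.integral_nonneg hst fun _ _ => norm_nonneg _
    · exact le_of_mul_le_mul_left h2 h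
  have hvar : eVariationOn γ (Icc a b) ≤ ENNReal.ofReal (∫ x in a..b, ‖deriv γ x‖) := by
    set g : ℝ → ℝ := fun t => ∫ x in a..t, ‖deriv γ x‖ with hg
    have hsub : ∀ s t, g t - g s = ∫ x in s..t, ‖deriv γ x‖ := fun s t =>
      intervalIntegral.integral_interval_sub_left (hint _ _) (hint _ _)
    have hmono : MonotoneOn g (Icc a b) := by
      intro s _ t _ hst
      have : 0 ≤ g t - g s := by
        rw [hsub]; exact intervalIntegral.integral_nonneg hst fun _ _ => norm_nonneg _
      linarith
    have h1 : eVariationOn γ (Icc a b) ≤ eVariationOn g (Icc a b) := by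
      unfold eVariationOn
      refine iSup_mono fun p => Finset.sum_le_sum fun i _ => ?_
      have h3 := p.2.2.1 (Nat.le_succ i)
      rw [edist_dist, edist_dist, dist_eq_norm, dist_eq_norm]
      refine ENNReal.ofReal_le_ofReal ((key _ _ h3).trans ?_)
      rw [← hsub]
      exact Real.le_norm_self _
    have h2 := hmono.eVariationOn_le (left_mem_Icc.2 hab.le) (right_mem_Icc.2 hab.le)
    rw [inter_self] at h2
    refine (h1.trans h2).trans (le_of_eq ?_)
    simp [hg]
  have hv := hspeed (left_mem_Icc.2 hab.le) (right_mem_Icc.2 hab.le)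
  rw [inter_self] at hv
  rw [hv] at hvar
  have hge : C * (b - a) ≤ ∫ x in a..b, ‖deriv γ x‖ := by
    refine (ENNReal.ofReal_le_ofReal_iff ?_).1 hvar
    exact intervalIntegral.integral_nonneg hab.le fun _ _ => norm_nonneg _
  have hzero : ∫ x in Icc a b, ((C : ℝ) - ‖deriv γ x‖) = 0 := by
    rw [integral_Icc_eq_integral_Ioc, ← intervalIntegral.integral_of_le hab.le]
    apply le_antisymm
    · rw [intervalIntegral.integral_sub intervalIntegrable_const (hint _ _)]
      simp only [intervalIntegral.integral_const, smul_eq_mul]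
      linarith
    · exact intervalIntegral.integral_nonneg hab.le fun x _ => sub_nonneg.2 (hle x)
  have hI : IntegrableOn (fun x => (C : ℝ) - ‖deriv γ x‖) (Icc a b) := by
    rw [integrableOn_Icc_iff_integrableOn_Ioc, ← intervalIntegrable_iff_integrableOn_Ioc_of_le hab.le]
    exact intervalIntegrable_const.sub (hint _ _)
  have := (setIntegral_eq_zero_iff_of_nonneg_ae
    (Filter.Eventually.of_forall fun x => sub_nonneg.2 (hle x)) hI).1 hzero
  filter_upwards [this] with x hx
  simp at hx
  linarith
structure IsFrame (U : Set E3) (e f : E3 → E3) : Prop where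
  isOpen : IsOpen U
  smooth1 : ContDiffOn ℝ 1 e U
  smooth2 : ContDiffOn ℝ 1 f U
  meas1 : Measurable e
  meas2 : Measurable f
  ne : ∀ x ∈ U, x ≠ 0
  ee : ∀ x ∈ U, ⟪e x, e x⟫ = 1
  ff : ∀ x ∈ U, ⟪f x, f x⟫ = 1
  ef : ∀ x ∈ U, ⟪e x, f x⟫ = 0
  xe : ∀ x ∈ U, ⟪x, e x⟫ = 0
  xf : ∀ x ∈ U, ⟪x, f x⟫ = 0

theorem inner3 (x y : E3) : ⟪x, y⟫ = x 0 * y 0 + x 1 * y 1 + x 2 * y 2 := by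
  simp [PiLp.inner_apply, Fin.sum_univ_three, mul_comm]

theorem contDiff_coord (i : Fin 3) : ContDiff ℝ 1 (fun x : E3 => x i) :=
  (EuclideanSpace.proj (𝕜 := ℝ) i).contDiff

theorem frame_smooth (U : Set E3) (g : E3 → E3) (h : ∀ i, ContDiffOn ℝ 1 (fun x => g x i) U) :
    ContDiffOn ℝ 1 g U := (contDiffOn_euclidean).2 h

theorem exists_frame (i j k : Fin 3) (hS : ∀ x y : E3, ⟪x, y⟫ = x i * y i + x j * y j + x k * y k)
    (hij : i ≠ j) (hik : i ≠ k) (hjk : j ≠ k) :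
    ∃ e f : E3 → E3, IsFrame {x | x i ^ 2 + x j ^ 2 ≠ 0} e f := by
  set U : Set E3 := {x | x i ^ 2 + x j ^ 2 ≠ 0} with hU
  let ρ : E3 → ℝ := fun x => √(x i ^ 2 + x j ^ 2)
  let R : E3 → ℝ := fun x => √(x i ^ 2 + x j ^ 2 + x k ^ 2)
  have hpos : ∀ x ∈ U, 0 < x i ^ 2 + x j ^ 2 := fun x hx =>
    lt_of_le_of_ne (by positivity) (Ne.symm hx)
  have hρ : ∀ x ∈ U, 0 < ρ x := fun x hx => Real.sqrt_pos.2 (hpos x hx)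
  have hρ2 : ∀ x ∈ U, ρ x ^ 2 = x i ^ 2 + x j ^ 2 := fun x hx => Real.sq_sqrt (hpos x hx).le
  have hposR : ∀ x ∈ U, 0 < x i ^ 2 + x j ^ 2 + x k ^ 2 := fun x hx => by
    have := hpos x hx; positivity
  have hR : ∀ x ∈ U, 0 < R x := fun x hx => Real.sqrt_pos.2 (hposR x hx)
  have hR2 : ∀ x ∈ U, R x ^ 2 = x i ^ 2 + x j ^ 2 + x k ^ 2 :=
    fun x hx => Real.sq_sqrt (hposR x hx).le
  have mc : ∀ m, Measurable (fun x : E3 => x m) := fun m => (contDiff_coord m).continuous.measurable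
  have mρ : Measurable ρ := (((mc i).pow_const 2).add ((mc j).pow_const 2)).sqrt
  have mR : Measurable R :=
    ((((mc i).pow_const 2).add ((mc j).pow_const 2)).add ((mc k).pow_const 2)).sqrt
  have cρ : ContDiffOn ℝ 1 ρ U := ContDiffOn.sqrt
    (((contDiff_coord i).pow 2).add ((contDiff_coord j).pow 2)).contDiffOn
    (fun x hx => (hpos x hx).ne')
  have cR : ContDiffOn ℝ 1 R U := ContDiffOn.sqrt
    ((((contDiff_coord i).pow 2).add ((contDiff_coord j).pow 2)).add
      ((contDiff_coord k).pow 2)).contDiffOn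
    (fun x hx => (hposR x hx).ne')
  have ci : ∀ m, ContDiffOn ℝ 1 (fun x : E3 => x m) U := fun m => (contDiff_coord m).contDiffOn
  have cρi : ContDiffOn ℝ 1 (fun x => (ρ x)⁻¹) U := cρ.inv fun x hx => (hρ x hx).ne'
  have cRi : ContDiffOn ℝ 1 (fun x => (R x)⁻¹) U := cR.inv fun x hx => (hR x hx).ne'
  let e : E3 → E3 := fun x => WithLp.toLp 2 fun m =>
    if m = i then -(x j * (ρ x)⁻¹) else if m = j then x i * (ρ x)⁻¹ else 0
  let f : E3 → E3 := fun x => WithLp.toLp 2 fun m =>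
    if m = i then -(x i * x k * (ρ x)⁻¹ * (R x)⁻¹) else
      if m = j then -(x j * x k * (ρ x)⁻¹ * (R x)⁻¹) else ρ x * (R x)⁻¹
  have ei : ∀ x, e x i = -(x j * (ρ x)⁻¹) := fun x => by simp [e]
  have ej : ∀ x, e x j = x i * (ρ x)⁻¹ := fun x => by simp [e, hij.symm]
  have ek : ∀ x, e x k = 0 := fun x => by simp [e, hik.symm, hjk.symm]
  have fi : ∀ x, f x i = -(x i * x k * (ρ x)⁻¹ * (R x)⁻¹) := fun x => by simp [f]
  have fj : ∀ x, f x j = -(x j * x k * (ρ x)⁻¹ * (R x)⁻¹) := fun x => by simp [f, hij.symm]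
  have fk : ∀ x, f x k = ρ x * (R x)⁻¹ := fun x => by simp [f, hik.symm, hjk.symm]
  refine ⟨e, f, ?_, ?_, ?_, ?_, ?_, ?_, ?_, ?_, ?_, ?_, ?_⟩
  · exact isOpen_ne_fun (((contDiff_coord i).continuous.pow 2).add
      ((contDiff_coord j).continuous.pow 2)) continuous_const
  · refine frame_smooth _ _ fun m => ?_
    by_cases h1 : m = i
    · subst h1; simp_rw [ei]; exact ((ci _).mul cρi).neg
    by_cases h2 : m = j
    · subst h2; simp_rw [ej]; exact ((ci _).mul cρi)
    · simp only [e, h1, h2, if_false]; exact contDiffOn_const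
  · refine frame_smooth _ _ fun m => ?_
    by_cases h1 : m = i
    · subst h1; simp_rw [fi]; exact ((((ci _).mul (ci _)).mul cρi).mul cRi).neg
    by_cases h2 : m = j
    · subst h2; simp_rw [fj]; exact ((((ci _).mul (ci _)).mul cρi).mul cRi).neg
    · simp only [f, h1, h2, if_false]; exact cρ.mul cRi
  · refine (MeasurableEquiv.toLp 2 (Fin 3 → ℝ)).measurable.comp (measurable_pi_iff.2 fun m => ?_)
    split_ifs <;> fun_prop
  · refine (MeasurableEquiv.toLp 2 (Fin 3 → ℝ)).measurable.comp (measurable_pi_iff.2 fun m => ?_)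
    split_ifs <;> fun_prop
  · rintro x hx rfl
    simp [hU] at hx
  all_goals
    intro x hx
    have a1 := hρ x hx
    have a2 := hρ2 x hx
    have a3 := hR x hx
    have a4 := hR2 x hx
    rw [hS]
    simp only [ei, ej, ek, fi, fj, fk]
    field_simp
  · linarith
  · rw [a4]
    nlinarith [a2]
  · ring
  · ring
  · rw [a2]; ring

theorem frame1 : ∃ e f : E3 → E3, IsFrame {x | x 0 ^ 2 + x 1 ^ 2 ≠ 0} e f :=
  exists_frame 0 1 2 inner3 (by decide) (by decide) (by decide)

theorem frame2 : ∃ e f : E3 → E3, IsFrame {x | x 1 ^ 2 + x 2 ^ 2 ≠ 0} e f :=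
  exists_frame 1 2 0 (fun x y => by rw [inner3]; ring) (by decide) (by decide) (by decide)

theorem frame_expand (x e f : E3) (hx : x ≠ 0) (ee : ⟪e, e⟫ = 1) (ff : ⟪f, f⟫ = 1)
    (ef : ⟪e, f⟫ = 0) (xe : ⟪x, e⟫ = 0) (xf : ⟪x, f⟫ = 0) (q : E3) :
    q = (⟪x, q⟫ / ‖x‖ ^ 2) • x + ⟪e, q⟫ • e + ⟪f, q⟫ • f := by
  have hx' : 0 < ‖x‖ := norm_pos_iff.2 hx
  have ho : Orthonormal ℝ ![‖x‖⁻¹ • x, e, f] := by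
    rw [orthonormal_iff_ite]
    intro i j
    have ex := real_inner_comm x e
    have fx := real_inner_comm x f
    have fe := real_inner_comm e f
    have n1 : ‖e‖ = 1 := by
      rw [real_inner_self_eq_norm_sq] at ee
      nlinarith [norm_nonneg e]
    have n2 : ‖f‖ = 1 := by
      rw [real_inner_self_eq_norm_sq] at ff
      nlinarith [norm_nonneg f]
    have n3 : ‖‖x‖⁻¹ • x‖ = 1 := by
      rw [norm_smul, norm_inv, norm_norm, inv_mul_cancel₀ hx'.ne']
    clear ee ff
    fin_cases i <;> fin_cases j <;>
      simp [inner_smul_left, inner_smul_right, *]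
  have hb := (basisOfOrthonormalOfCardEqFinrank ho (by simp))
  let b := (basisOfOrthonormalOfCardEqFinrank ho (by simp)).toOrthonormalBasis
    (by simpa using ho)
  have hbe : ∀ i, b i = (![‖x‖⁻¹ • x, e, f] : Fin 3 → E3) i := by
    intro i; simp [b]
  have := (b.sum_repr' q).symm
  rw [Fin.sum_univ_three, hbe, hbe, hbe] at this
  simp only [Matrix.cons_val_zero, Matrix.cons_val_one, Matrix.cons_val] at this
  rw [inner_smul_left, smul_smul] at this
  conv_lhs => rw [this]
  congr 3
  simp; field_simp
/-- The point at angle `θ` on the circle of tangency. -/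
def pt (e f : E3 → E3) (x : E3) (θ : ℝ) : E3 :=
  (‖x‖ ^ 2)⁻¹ • x + (√(‖x‖ ^ 2 - 1) / ‖x‖) • (Real.cos θ • e x + Real.sin θ • f x)

section
variable {U : Set E3} {e f : E3 → E3}

theorem pt_inner_left (hF : IsFrame U e f) {x : E3} (hx : x ∈ U) (θ : ℝ) :
    ⟪x, pt e f x θ⟫ = 1 := by
  have h0 : 0 < ‖x‖ := norm_pos_iff.2 (hF.ne x hx)
  simp only [pt, inner_add_right, inner_smul_right, hF.xe x hx, hF.xf x hx,
    real_inner_self_eq_norm_sq]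
  field_simp
  ring

theorem pt_inner_e (hF : IsFrame U e f) {x : E3} (hx : x ∈ U) (θ : ℝ) :
    ⟪e x, pt e f x θ⟫ = (√(‖x‖ ^ 2 - 1) / ‖x‖) * Real.cos θ := by
  have := real_inner_comm x (e x)
  simp only [pt, inner_add_right, inner_smul_right, hF.ee x hx, hF.ef x hx,
    this, hF.xe x hx]
  ring

theorem pt_inner_f (hF : IsFrame U e f) {x : E3} (hx : x ∈ U) (θ : ℝ) :
    ⟪f x, pt e f x θ⟫ = (√(‖x‖ ^ 2 - 1) / ‖x‖) * Real.sin θ := by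
  have := real_inner_comm x (f x)
  have h2 := real_inner_comm (e x) (f x)
  simp only [pt, inner_add_right, inner_smul_right, hF.ff x hx, hF.ef x hx, h2,
    this, hF.xf x hx]
  ring

theorem expand_norm (hF : IsFrame U e f) {x : E3} (hx : x ∈ U) (q : E3) :
    ‖q‖ ^ 2 = ⟪x, q⟫ ^ 2 / ‖x‖ ^ 2 + ⟪e x, q⟫ ^ 2 + ⟪f x, q⟫ ^ 2 := by
  have h := frame_expand x (e x) (f x) (hF.ne x hx) (hF.ee x hx) (hF.ff x hx) (hF.ef x hx)
    (hF.xe x hx) (hF.xf x hx) q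
  rw [← real_inner_self_eq_norm_sq]
  conv_lhs => rw [h]
  simp only [inner_add_left, inner_smul_left, conj_trivial]
  rw [← h]
  ring

theorem pt_norm (hF : IsFrame U e f) {x : E3} (hx : x ∈ U) (h1 : 1 ≤ ‖x‖) (θ : ℝ) :
    ‖pt e f x θ‖ = 1 := by
  have h0 : 0 < ‖x‖ := by linarith
  have h2 : √(‖x‖ ^ 2 - 1) ^ 2 = ‖x‖ ^ 2 - 1 := Real.sq_sqrt (by nlinarith)
  have h := expand_norm hF hx (pt e f x θ)
  rw [pt_inner_left hF hx, pt_inner_e hF hx, pt_inner_f hF hx, mul_pow, mul_pow, div_pow, h2] at h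
  have h3 : ‖pt e f x θ‖ ^ 2 = 1 := by
    rw [h]
    have := Real.sin_sq_add_cos_sq θ
    field_simp
    linear_combination (‖x‖ ^ 2 - 1) * this
  nlinarith [norm_nonneg (pt e f x θ)]

theorem pt_surj (hF : IsFrame U e f) {x : E3} (hx : x ∈ U) (h1 : 1 < ‖x‖) (q : E3)
    (hq : ‖q‖ = 1) (hxq : ⟪x, q⟫ = 1) : ∃ θ ∈ Ioc (-π) π, pt e f x θ = q := by
  have h0 : 0 < ‖x‖ := by linarith
  have hs : 0 < √(‖x‖ ^ 2 - 1) := Real.sqrt_pos.2 (by nlinarith)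
  have h2 : √(‖x‖ ^ 2 - 1) ^ 2 = ‖x‖ ^ 2 - 1 := Real.sq_sqrt (by nlinarith)
  obtain ⟨κ, hκ⟩ : ∃ κ, κ = √(‖x‖ ^ 2 - 1) / ‖x‖ := ⟨_, rfl⟩
  have hκ0 : 0 < κ := by rw [hκ]; positivity
  have hκ2 : κ ^ 2 = 1 - 1 / ‖x‖ ^ 2 := by
    rw [hκ, div_pow, h2]; field_simp
  have hn := expand_norm hF hx q
  rw [hq, hxq] at hn
  have hsum : ⟪e x, q⟫ ^ 2 + ⟪f x, q⟫ ^ 2 = κ ^ 2 := by rw [hκ2]; linarith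
  let z : ℂ := ⟨⟪e x, q⟫ / κ, ⟪f x, q⟫ / κ⟩
  have hz : ‖z‖ = 1 := by
    rw [Complex.norm_def, Complex.normSq_mk, ← sq, ← sq, div_pow, div_pow, ← add_div, hsum]
    simp [hκ0.ne']
  have hz0 : z ≠ 0 := by intro h; rw [h] at hz; simp at hz
  refine ⟨z.arg, Complex.arg_mem_Ioc z, ?_⟩
  have hc : Real.cos z.arg = ⟪e x, q⟫ / κ := by rw [Complex.cos_arg hz0, hz]; simp [z]
  have hs : Real.sin z.arg = ⟪f x, q⟫ / κ := by rw [Complex.sin_arg, hz]; simp [z]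
  have h := frame_expand x (e x) (f x) (hF.ne x hx) (hF.ee x hx) (hF.ff x hx) (hF.ef x hx)
    (hF.xe x hx) (hF.xf x hx) q
  rw [hxq, one_div] at h
  rw [pt, ← hκ, hc, hs, smul_add, smul_smul, smul_smul, mul_div_cancel₀ _ hκ0.ne',
    mul_div_cancel₀ _ hκ0.ne', ← add_assoc]
  exact h.symm

theorem pt_inj (hF : IsFrame U e f) {x : E3} (hx : x ∈ U) (h1 : 1 < ‖x‖) {θ φ : ℝ}
    (hθ : θ ∈ Ioc (-π) π) (hφ : φ ∈ Ioc (-π) π) (h : pt e f x θ = pt e f x φ) : θ = φ := by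
  have h0 : 0 < ‖x‖ := by linarith
  have hs : 0 < √(‖x‖ ^ 2 - 1) := Real.sqrt_pos.2 (by nlinarith)
  have hκ0 : √(‖x‖ ^ 2 - 1) / ‖x‖ ≠ 0 := by positivity
  have hc : Real.cos θ = Real.cos φ := by
    have := pt_inner_e hF hx θ
    rw [h, pt_inner_e hF hx] at this
    exact (mul_left_cancel₀ hκ0 this).symm
  have hs : Real.sin θ = Real.sin φ := by
    have := pt_inner_f hF hx θ
    rw [h, pt_inner_f hF hx] at this
    exact (mul_left_cancel₀ hκ0 this).symm
  have e1 := Complex.arg_cos_add_sin_mul_I hθ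
  have e2 := Complex.arg_cos_add_sin_mul_I hφ
  rw [← e1, ← e2, ← Complex.ofReal_cos, ← Complex.ofReal_sin, hc, hs]
  simp

theorem smooth_G (hF : IsFrame U e f) (z : E3 × ℝ × ℝ) (hx : z.1 ∈ U) (h1 : 1 < ‖z.1‖) :
    ContDiffAt ℝ 1 (fun z : E3 × ℝ × ℝ => z.2.2 • pt e f z.1 z.2.1) z := by
  have hn : ContDiffAt ℝ 1 (fun z : E3 × ℝ × ℝ => ‖z.1‖ ^ 2) z := contDiffAt_fst.norm_sq ℝ
  have hn1 : ContDiffAt ℝ 1 (fun z : E3 × ℝ × ℝ => ‖z.1‖) z :=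
    contDiffAt_fst.norm ℝ (hF.ne _ hx)
  have he : ContDiffAt ℝ 1 (fun z : E3 × ℝ × ℝ => e z.1) z :=
    (hF.smooth1.contDiffAt (hF.isOpen.mem_nhds hx)).comp z contDiffAt_fst
  have hf : ContDiffAt ℝ 1 (fun z : E3 × ℝ × ℝ => f z.1) z :=
    (hF.smooth2.contDiffAt (hF.isOpen.mem_nhds hx)).comp z contDiffAt_fst
  have h21 : ContDiffAt ℝ 1 (fun z : E3 × ℝ × ℝ => z.2.1) z := contDiffAt_fst.comp z contDiffAt_snd
  have h22 : ContDiffAt ℝ 1 (fun z : E3 × ℝ × ℝ => z.2.2) z := contDiffAt_snd.comp z contDiffAt_snd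
  have h0 : 0 < ‖z.1‖ := by linarith
  have hsq : ContDiffAt ℝ 1 (fun z : E3 × ℝ × ℝ => √(‖z.1‖ ^ 2 - 1)) z :=
    (hn.sub contDiffAt_const).sqrt (by nlinarith)
  exact h22.smul (((hn.inv (by positivity)).smul contDiffAt_fst).add
    ((hsq.div hn1 h0.ne').smul ((h21.cos.smul he).add (h21.sin.smul hf))))

/-- Full parametrization. -/
def FF (γ : ℝ → E3) (e f : E3 → E3) (y : E3) : E3 := y 2 • pt e f (γ (y 0)) (y 1)

theorem lip_triple (γ : ℝ → E3) (C : ℝ≥0) (hL : LipschitzWith C γ) :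
    ∃ K, LipschitzWith K (fun y : E3 => (γ (y 0), y 1, y 2)) := by
  have hp : ∀ i : Fin 3, LipschitzWith 1 (fun y : E3 => y i) := fun i => by
    refine LipschitzWith.of_dist_le_mul fun x y => ?_
    simp only [NNReal.coe_one, one_mul, dist_eq_norm]
    exact PiLp.norm_apply_le (x - y) i
  exact ⟨_, (hL.comp (hp 0)).prodMk ((hp 1).prodMk (hp 2))⟩

theorem FF_lip (hF : IsFrame U e f) (γ : ℝ → E3) (C : ℝ≥0) (hL : LipschitzWith C γ) (y : E3)
    (hy : γ (y 0) ∈ U) (hy1 : 1 < ‖γ (y 0)‖) :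
    ∃ K : ℝ≥0, ∃ V ∈ nhds y, LipschitzOnWith K (FF γ e f) V := by
  obtain ⟨K1, h1⟩ := lip_triple γ C hL
  obtain ⟨K2, V, hV, h2⟩ := (smooth_G hF (γ (y 0), y 1, y 2) hy hy1).exists_lipschitzOnWith
  refine ⟨K2 * K1, (fun y : E3 => (γ (y 0), y 1, y 2)) ⁻¹' V,
    h1.continuous.continuousAt.preimage_mem_nhds hV, ?_⟩
  have h3 : LipschitzOnWith K1 (fun y : E3 => (γ (y 0), y 1, y 2))
    ((fun y : E3 => (γ (y 0), y 1, y 2)) ⁻¹' V) := h1.lipschitzOnWith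
  have h4 := h2.comp h3 (mapsTo_preimage _ _)
  have h5 : FF γ e f = (fun z : E3 × ℝ × ℝ => z.2.2 • pt e f z.1 z.2.1) ∘
    (fun y : E3 => (γ (y 0), y 1, y 2)) := by
    funext y; rfl
  rw [h5]
  exact h4

theorem FF_diff (hF : IsFrame U e f) (γ : ℝ → E3) (y : E3) (hd : DifferentiableAt ℝ γ (y 0))
    (hy : γ (y 0) ∈ U) (hy1 : 1 < ‖γ (y 0)‖) :
    DifferentiableAt ℝ (FF γ e f) y := by
  have h2 := (smooth_G hF (γ (y 0), y 1, y 2) hy hy1).differentiableAt (by simp)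
  have hc : ∀ i, DifferentiableAt ℝ (fun y : E3 => y i) y := fun i =>
    (contDiff_coord i).contDiffAt.differentiableAt (by simp)
  have h1 : DifferentiableAt ℝ (fun y : E3 => (γ (y 0), y 1, y 2)) y :=
    (DifferentiableAt.comp (f := fun y : E3 => y 0) y hd (hc 0)).prodMk ((hc 1).prodMk (hc 2))
  exact DifferentiableAt.comp (f := fun y : E3 => (γ (y 0), y 1, y 2)) y h2 h1
end
/-- Triple product. -/
def det3 (a b c : E3) : ℝ :=
  a 0 * (b 1 * c 2 - b 2 * c 1) - a 1 * (b 0 * c 2 - b 2 * c 0) + a 2 * (b 0 * c 1 - b 1 * c 0)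

theorem det3_mul (a b c x y z : E3) : det3 a b c * det3 x y z =
    ⟪a, x⟫ * (⟪b, y⟫ * ⟪c, z⟫ - ⟪b, z⟫ * ⟪c, y⟫) - ⟪a, y⟫ * (⟪b, x⟫ * ⟪c, z⟫ - ⟪b, z⟫ * ⟪c, x⟫)
      + ⟪a, z⟫ * (⟪b, x⟫ * ⟪c, y⟫ - ⟪b, y⟫ * ⟪c, x⟫) := by
  simp only [inner3, det3]; ring

theorem clm_det (A : E3 →L[ℝ] E3) : A.det = det3 (A (EuclideanSpace.single 0 1))
    (A (EuclideanSpace.single 1 1)) (A (EuclideanSpace.single 2 1)) := by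
  rw [ContinuousLinearMap.det,
    ← LinearMap.det_toMatrix (EuclideanSpace.basisFun (Fin 3) ℝ).toBasis, Matrix.det_fin_three]
  simp [LinearMap.toMatrix_apply, det3]
  ring

theorem det3_abs (g a w p : E3) (r m : ℝ) (hr : 0 < r) (hg : 1 < ‖g‖) (hga : ⟪g, a⟫ = -(r * m))
    (hpa : ⟪p, a⟫ = 0) (hwp : ⟪w, p⟫ = 0) (hwg : ⟪w, g⟫ = 0)
    (hww : ⟪w, w⟫ = r ^ 2 * ((‖g‖ ^ 2 - 1) / ‖g‖ ^ 2)) (hgp : ⟪g, p⟫ = 1) (hpp : ⟪p, p⟫ = 1) :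
    |det3 a w p| = r ^ 2 * (|m| / ‖g‖) := by
  have h0 : 0 < ‖g‖ := by linarith
  have hg1 : 0 < ‖g‖ ^ 2 - 1 := by nlinarith
  have hgg := real_inner_self_eq_norm_sq g
  have c1 := real_inner_comm g a
  have c2 := real_inner_comm p a
  have c3 := real_inner_comm w p
  have c4 := real_inner_comm w g
  have c5 := real_inner_comm g p
  have h1 := det3_mul a w p g w p
  have h2 := det3_mul g w p g w p
  rw [hwp, hwg, hww, c3, c2, hpa, c1, hga, hpp, hwp, c5, hgp] at h1
  rw [hwp, hwg, hww, c3, hpp, hwp, c5, hgp, hgg, c4, hwg] at h2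
  have h3 : det3 a w p ^ 2 * (det3 g w p * det3 g w p) = (det3 a w p * det3 g w p) ^ 2 := by ring
  rw [h1, h2] at h3
  have h4 : det3 a w p ^ 2 = (r ^ 2 * (|m| / ‖g‖)) ^ 2 := by
    rw [mul_pow, div_pow, sq_abs]
    field_simp at h3
    have h5 : r ^ 2 * (‖g‖ ^ 2 - 1) ^ 2 ≠ 0 := by positivity
    have h6 : det3 a w p ^ 2 * ‖g‖ ^ 2 = r ^ 4 * m ^ 2 := by
      apply mul_right_cancel₀ h5
      linear_combination h3
    rw [← mul_div_assoc, eq_div_iff (by positivity), h6]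
    ring
  rw [← Real.sqrt_sq_eq_abs, h4, Real.sqrt_sq (by positivity)]

theorem FF_det {U : Set E3} {e f : E3 → E3} (hF : IsFrame U e f) (γ : ℝ → E3) (y : E3)
    (hd : DifferentiableAt ℝ γ (y 0))
    (hy : γ (y 0) ∈ U) (hy1 : 1 < ‖γ (y 0)‖) (hr : 0 < y 2) :
    |(fderiv ℝ (FF γ e f) y).det| =
      (y 2) ^ 2 * (|⟪deriv γ (y 0), pt e f (γ (y 0)) (y 1)⟫| / ‖γ (y 0)‖) := by
  have hdF := (FF_diff hF γ y hd hy hy1).hasFDerivAt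
  set A := fderiv ℝ (FF γ e f) y with hA
  set p := pt e f (γ (y 0)) (y 1) with hp
  have hFy : FF γ e f y = y 2 • p := rfl
  -- line derivatives
  have hline : ∀ i : Fin 3, HasDerivAt (fun s : ℝ => y + s • (EuclideanSpace.single i 1 : E3))
      (EuclideanSpace.single i 1) 0 := by
    intro i
    simpa using ((hasDerivAt_id (0:ℝ)).smul_const (EuclideanSpace.single i 1 : E3)).const_add y
  have hcomp : ∀ i : Fin 3, HasDerivAt
      (fun s : ℝ => FF γ e f (y + s • (EuclideanSpace.single i 1 : E3)))
      (A (EuclideanSpace.single i 1)) 0 := by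
    intro i
    have h1 : HasFDerivAt (FF γ e f) A (y + (0:ℝ) • (EuclideanSpace.single i 1 : E3)) := by
      simpa using hdF
    exact h1.comp_hasDerivAt (0:ℝ) (hline i)
  have hA2 : A (EuclideanSpace.single 2 1) = p := by
    have h1 : HasDerivAt (fun s : ℝ => FF γ e f (y + s • (EuclideanSpace.single 2 1 : E3))) p 0 := by
      have h2 : (fun s : ℝ => FF γ e f (y + s • (EuclideanSpace.single 2 1 : E3)))
          = fun s => (y 2 + s) • p := by
        funext s; simp [FF, hp]
      rw [h2]
      simpa using ((hasDerivAt_id (0:ℝ)).const_add (y 2)).smul_const p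
    exact (hcomp 2).unique h1
  set κ := √(‖γ (y 0)‖ ^ 2 - 1) / ‖γ (y 0)‖ with hκ
  have hA1 : A (EuclideanSpace.single 1 1) =
      y 2 • (κ • (-Real.sin (y 1) • e (γ (y 0)) + Real.cos (y 1) • f (γ (y 0)))) := by
    have h1 : HasDerivAt (fun s : ℝ => FF γ e f (y + s • (EuclideanSpace.single 1 1 : E3)))
        (y 2 • (κ • (-Real.sin (y 1) • e (γ (y 0)) + Real.cos (y 1) • f (γ (y 0))))) 0 := by
      have h2 : (fun s : ℝ => FF γ e f (y + s • (EuclideanSpace.single 1 1 : E3)))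
          = fun s => y 2 • ((‖γ (y 0)‖ ^ 2)⁻¹ • γ (y 0) + κ • (Real.cos (y 1 + s) • e (γ (y 0)) +
            Real.sin (y 1 + s) • f (γ (y 0)))) := by
        funext s; simp [FF, pt, hκ]
      rw [h2]
      have h3 : HasDerivAt (fun s : ℝ => y 1 + s) 1 0 := by
        simpa using (hasDerivAt_id (0:ℝ)).const_add (y 1)
      have h4 : HasDerivAt (fun s : ℝ => Real.cos (y 1 + s)) (-Real.sin (y 1)) 0 := by
        simpa using h3.cos
      have h5 : HasDerivAt (fun s : ℝ => Real.sin (y 1 + s)) (Real.cos (y 1)) 0 := by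
        simpa using h3.sin
      exact ((((h4.smul_const _).add (h5.smul_const _)).const_smul κ).const_add _).const_smul (y 2)
    exact (hcomp 1).unique h1
  have h0line : HasDerivAt (fun s : ℝ => γ (y 0 + s)) (deriv γ (y 0)) 0 := by
    have h3 : HasDerivAt (fun s : ℝ => y 0 + s) 1 0 := by
      simpa using (hasDerivAt_id (0:ℝ)).const_add (y 0)
    have h4 : HasDerivAt γ (deriv γ (y 0)) (y 0 + 0) := by simpa using hd.hasDerivAt
    have h5 := h4.scomp (0:ℝ) h3
    rw [one_smul] at h5
    exact h5
  have hev : ∀ᶠ s in nhds (0:ℝ), γ (y 0 + s) ∈ U ∧ 1 < ‖γ (y 0 + s)‖ := by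
    have hc : ContinuousAt (fun s : ℝ => γ (y 0 + s)) 0 := h0line.continuousAt
    have h1 : ∀ᶠ x in nhds (γ (y 0 + 0)), x ∈ U ∧ 1 < ‖x‖ := by
      rw [add_zero]
      exact (hF.isOpen.eventually_mem hy).and (continuous_norm.continuousAt.eventually (lt_mem_nhds hy1))
    exact hc.eventually h1
  have hFs : ∀ s : ℝ, FF γ e f (y + s • (EuclideanSpace.single 0 1 : E3)) =
      y 2 • pt e f (γ (y 0 + s)) (y 1) := by
    intro s; simp [FF]
  have hga : ⟪γ (y 0), A (EuclideanSpace.single 0 1)⟫ = -(y 2 * ⟪deriv γ (y 0), p⟫) := by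
    have h1 := h0line.inner ℝ (hcomp 0)
    have h2 : (fun s : ℝ => ⟪γ (y 0 + s), FF γ e f (y + s • (EuclideanSpace.single 0 1 : E3))⟫)
        =ᶠ[nhds 0] fun _ => y 2 := by
      filter_upwards [hev] with s hs
      rw [hFs, inner_smul_right, pt_inner_left hF hs.1, mul_one]
    have h3 := h1.unique ((hasDerivAt_const (0:ℝ) (y 2)).congr_of_eventuallyEq h2)
    rw [hFs, inner_smul_right] at h3
    simp only [add_zero] at h3
    linarith
  have hpa : ⟪p, A (EuclideanSpace.single 0 1)⟫ = 0 := by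
    have h1 := (hcomp 0).inner ℝ (hcomp 0)
    have h2 : (fun s : ℝ => ⟪FF γ e f (y + s • (EuclideanSpace.single 0 1 : E3)),
        FF γ e f (y + s • (EuclideanSpace.single 0 1 : E3))⟫)
        =ᶠ[nhds 0] fun _ => y 2 ^ 2 := by
      filter_upwards [hev] with s hs
      rw [hFs, inner_smul_right, inner_smul_left, real_inner_self_eq_norm_sq,
        pt_norm hF hs.1 hs.2.le]
      simp; ring
    have h3 := h1.unique ((hasDerivAt_const (0:ℝ) (y 2 ^ 2)).congr_of_eventuallyEq h2)
    rw [hFs, inner_smul_right, inner_smul_left] at h3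
    simp only [add_zero, conj_trivial] at h3
    rw [← hp, real_inner_comm p] at h3
    have : y 2 * ⟪p, A (EuclideanSpace.single 0 1)⟫ = 0 := by linarith
    exact (mul_eq_zero.1 this).resolve_left hr.ne'
  rw [clm_det]
  have hpe := pt_inner_e hF hy (y 1)
  have hpf := pt_inner_f hF hy (y 1)
  have ex := real_inner_comm (γ (y 0)) (e (γ (y 0)))
  have fx := real_inner_comm (γ (y 0)) (f (γ (y 0)))
  have fe := real_inner_comm (e (γ (y 0))) (f (γ (y 0)))
  have hκ2 : κ ^ 2 = (‖γ (y 0)‖ ^ 2 - 1) / ‖γ (y 0)‖ ^ 2 := by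
    rw [hκ, div_pow, Real.sq_sqrt (by nlinarith)]
  refine det3_abs (γ (y 0)) _ _ _ _ _ hr hy1 hga ?_ ?_ ?_ ?_ ?_ ?_
  · rw [hA2]; exact hpa
  · rw [hA1, hA2]
    simp only [inner_smul_left, inner_add_left, conj_trivial, hp, hpe, hpf]
    ring
  · rw [hA1]
    simp only [inner_smul_left, inner_add_left, conj_trivial, ex, fx, hF.xe _ hy, hF.xf _ hy]
    ring
  · rw [hA1]
    simp only [inner_smul_left, inner_add_left, inner_smul_right, inner_add_right, conj_trivial,
      hF.ee _ hy, hF.ff _ hy, fe, hF.ef _ hy]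
    rw [← hκ2]
    have := Real.sin_sq_add_cos_sq (y 1)
    linear_combination (y 2 ^ 2 * κ ^ 2) * this
  · rw [hA2]; exact pt_inner_left hF hy _
  · rw [hA2, real_inner_self_eq_norm_sq, pt_norm hF hy hy1.le]; norm_num
/-- Coordinates as a triple. -/
def Psi (y : E3) : ℝ × ℝ × ℝ := (y 0, y 1, y 2)

theorem Psi_mp : MeasurePreserving Psi volume volume := by
  have h1 := EuclideanSpace.volume_preserving_symm_measurableEquiv_toLp (Fin 3)
  have h2 := volume_preserving_piFinSuccAbove (fun _ : Fin 3 => ℝ) 0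
  have h3 := volume_preserving_finTwoArrow ℝ
  have h4 := ((MeasurePreserving.id (volume : Measure ℝ)).prod h3).comp (h2.comp h1)
  exact h4

theorem box_meas {A I J : Set ℝ} (hA : MeasurableSet A) (hI : MeasurableSet I)
    (hJ : MeasurableSet J) : MeasurableSet (Psi ⁻¹' (A ×ˢ I ×ˢ J)) :=
  Psi_mp.measurable (hA.prod (hI.prod hJ))

theorem box_null {A : Set ℝ} (hA : volume A = 0) (B : Set (ℝ × ℝ)) :
    volume (Psi ⁻¹' (A ×ˢ B)) = 0 := by
  apply Psi_mp.quasiMeasurePreserving.preimage_null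
  rw [Measure.volume_eq_prod, Measure.prod_prod, hA, zero_mul]

theorem lintegral_sq : ∫⁻ r in Ioo (0:ℝ) 1, ENNReal.ofReal (r ^ 2) = 3⁻¹ := by
  rw [Measure.restrict_congr_set Ioo_ae_eq_Ioc,
    ← ofReal_integral_eq_lintegral_ofReal (intervalIntegral.intervalIntegrable_pow 2).1,
    ← intervalIntegral.integral_of_le zero_le_one]
  · simp
    norm_num
    rw [one_div, ENNReal.ofReal_inv_of_pos (by norm_num)]
    norm_num
  · filter_upwards with y
    positivity

theorem fub (G : ℝ → ℝ → ℝ≥0∞) (hG : Measurable (Function.uncurry G)) (A I : Set ℝ)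
    (hA : MeasurableSet A) (hI : MeasurableSet I) :
    ∫⁻ y in Psi ⁻¹' (A ×ˢ I ×ˢ Ioo 0 1), ENNReal.ofReal ((y 2) ^ 2) * G (y 0) (y 1)
      = 3⁻¹ * ∫⁻ t in A, ∫⁻ θ in I, G t θ := by
  have hm : Measurable (fun z : ℝ × ℝ × ℝ => ENNReal.ofReal (z.2.2 ^ 2) * G z.1 z.2.1) := by
    have : Measurable (fun z : ℝ × ℝ × ℝ => G z.1 z.2.1) :=
      hG.comp (measurable_fst.prodMk (measurable_fst.comp measurable_snd))
    fun_prop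
  have h1 := Psi_mp.setLIntegral_comp_preimage (hA.prod (hI.prod (measurableSet_Ioo (a := (0:ℝ)) (b := 1)))) hm
  refine h1.trans ?_
  rw [Measure.volume_eq_prod, ← Measure.prod_restrict, Measure.volume_eq_prod,
    ← Measure.prod_restrict, lintegral_prod _ hm.aemeasurable, ← lintegral_const_mul']
  · refine lintegral_congr fun t => ?_
    rw [lintegral_prod, ← lintegral_const_mul']
    · refine lintegral_congr fun θ => ?_
      show ∫⁻ r in Ioo (0:ℝ) 1, ENNReal.ofReal (r ^ 2) * G t θ = _
      rw [lintegral_mul_const, lintegral_sq]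
      fun_prop
    · simp
    · exact (hm.comp measurable_prodMk_left).aemeasurable
  · simp

/-- Counting function. -/
def cnt (γ : ℝ → E3) (A : Set ℝ) (x : E3) : ℝ≥0∞ := ((A ∩ {t | ⟪γ t, x⟫ = ‖x‖}).encard : ℝ≥0∞)

theorem FF_norm {U : Set E3} {e f : E3 → E3} (hF : IsFrame U e f) (γ : ℝ → E3) (y : E3)
    (hy : γ (y 0) ∈ U) (hy1 : 1 < ‖γ (y 0)‖) (hr : 0 < y 2) : ‖FF γ e f y‖ = y 2 := by
  rw [FF, norm_smul, pt_norm hF hy hy1.le, mul_one, Real.norm_of_nonneg hr.le]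

theorem FF_mem {U : Set E3} {e f : E3 → E3} (hF : IsFrame U e f) (γ : ℝ → E3) (A : Set ℝ)
    (hA : ∀ t ∈ A, γ t ∈ U ∧ 1 < ‖γ t‖) (x : E3) (hx : x ∈ Metric.ball (0:E3) 1 \ {0}) (t : ℝ)
    (ht : t ∈ A) (htx : ⟪γ t, x⟫ = ‖x‖) :
    ∃ y ∈ Psi ⁻¹' (A ×ˢ Ioc (-π) π ×ˢ Ioo 0 1), FF γ e f y = x ∧ y 0 = t := by
  have hx0 : 0 < ‖x‖ := norm_pos_iff.2 hx.2
  have hx1 : ‖x‖ < 1 := by simpa using hx.1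
  obtain ⟨θ, hθ, hp⟩ := pt_surj hF (hA t ht).1 (hA t ht).2 (‖x‖⁻¹ • x)
    (by rw [norm_smul, norm_inv, norm_norm, inv_mul_cancel₀ hx0.ne'])
    (by rw [inner_smul_right, htx, inv_mul_cancel₀ hx0.ne'])
  refine ⟨!₂[t, θ, ‖x‖], ⟨by simpa [Psi] using ht, by simpa [Psi] using hθ, by simpa [Psi] using ⟨hx.2, hx1⟩⟩, ?_, by simp⟩
  simp [FF, hp, smul_smul, hx0.ne']

theorem fiber_card {U : Set E3} {e f : E3 → E3} (hF : IsFrame U e f) (γ : ℝ → E3) (A : Set ℝ)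
    (hA : ∀ t ∈ A, γ t ∈ U ∧ 1 < ‖γ t‖) (x : E3) :
    (((Psi ⁻¹' (A ×ˢ Ioc (-π) π ×ˢ Ioo 0 1)) ∩ FF γ e f ⁻¹' {x}).encard : ℝ≥0∞)
      = (Metric.ball (0:E3) 1 \ {0}).indicator (cnt γ A) x := by
  by_cases hx : x ∈ Metric.ball (0:E3) 1 \ {0}
  · rw [indicator_of_mem hx, cnt]
    congr 1
    have hinj : InjOn (fun y : E3 => y 0)
        ((Psi ⁻¹' (A ×ˢ Ioc (-π) π ×ˢ Ioo 0 1)) ∩ FF γ e f ⁻¹' {x}) := by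
      rintro y ⟨⟨hy0, hy1, hy2⟩, hyx⟩ z ⟨⟨hz0, hz1, hz2⟩, hzx⟩ h
      simp only [Psi] at hy0 hy1 hy2 hz0 hz1 hz2
      simp only at h
      have hyn := FF_norm hF γ y (hA _ hy0).1 (hA _ hy0).2 hy2.1
      have hzn := FF_norm hF γ z (hA _ hz0).1 (hA _ hz0).2 hz2.1
      have h2 : y 2 = z 2 := by
        rw [← hyn, ← hzn, hyx, hzx]
      have h3 : FF γ e f y = FF γ e f z := by rw [hyx, hzx]
      rw [FF, FF, h2, ← h] at h3
      have h4 := pt_inj hF (hA _ hy0).1 (hA _ hy0).2 hy1 hz1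
        (smul_right_injective E3 hz2.1.ne' h3)
      ext i
      fin_cases i
      · exact h
      · exact h4
      · exact h2
    rw [← hinj.encard_image]
    congr 1
    ext t
    constructor
    · rintro ⟨y, ⟨⟨hy0, hy1, hy2⟩, hyx⟩, rfl⟩
      simp only [Psi] at hy0 hy1 hy2
      refine ⟨hy0, ?_⟩
      have hyn := FF_norm hF γ y (hA _ hy0).1 (hA _ hy0).2 hy2.1
      have hyx : FF γ e f y = x := hyx
      rw [hyx] at hyn
      show ⟪γ (y 0), x⟫ = ‖x‖
      rw [hyn, ← hyx, FF, inner_smul_right, pt_inner_left hF (hA _ hy0).1, mul_one]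
    · rintro ⟨ht, htx⟩
      obtain ⟨y, h1, h2, h3⟩ := FF_mem hF γ A hA x hx t ht htx
      exact ⟨y, ⟨h1, h2⟩, h3⟩
  · rw [indicator_of_notMem hx]
    have : (Psi ⁻¹' (A ×ˢ Ioc (-π) π ×ˢ Ioo 0 1)) ∩ FF γ e f ⁻¹' {x} = ∅ := by
      refine eq_empty_of_forall_notMem ?_
      rintro y ⟨⟨hy0, hy1, hy2⟩, hyx⟩
      simp only [Psi] at hy0 hy1 hy2
      have hyn := FF_norm hF γ y (hA _ hy0).1 (hA _ hy0).2 hy2.1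
      have hyx : FF γ e f y = x := hyx
      rw [hyx] at hyn
      apply hx
      refine ⟨by simpa [hyn] using hy2.2, ?_⟩
      rintro rfl
      simp at hyn
      linarith [hy2.1]
    rw [this]; simp

theorem piece {U : Set E3} {e f : E3 → E3} (hF : IsFrame U e f) (γ : ℝ → E3) (C : ℝ≥0)
    (hL : LipschitzWith C γ) (A : Set ℝ) (hAm : MeasurableSet A)
    (hA : ∀ t ∈ A, γ t ∈ U ∧ 1 < ‖γ t‖) :
    AEMeasurable ((Metric.ball (0:E3) 1 \ {0}).indicator (cnt γ A)) volume ∧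
    ∫⁻ x, (Metric.ball (0:E3) 1 \ {0}).indicator (cnt γ A) x = 3⁻¹ * ∫⁻ t in A,
      ∫⁻ θ in Ioc (-π) π, ENNReal.ofReal (|⟪deriv γ t, pt e f (γ t) θ⟫| / ‖γ t‖) := by
  set D : Set ℝ := {t | DifferentiableAt ℝ γ t} with hD
  have hDm : MeasurableSet D := measurableSet_of_differentiableAt ℝ γ
  have hDn : volume Dᶜ = 0 := hL.ae_differentiableAt
  have hA' : ∀ t ∈ A ∩ D, γ t ∈ U ∧ 1 < ‖γ t‖ := fun t ht => hA t ht.1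
  set B := Psi ⁻¹' ((A ∩ D) ×ˢ Ioc (-π) π ×ˢ Ioo 0 1) with hB
  have hBm : MeasurableSet B := box_meas (hAm.inter hDm) measurableSet_Ioc measurableSet_Ioo
  obtain ⟨am, ai⟩ := area_mult volume (FF γ e f) (fun y => fderiv ℝ (FF γ e f) y) B hBm
    (fun y hy => ((FF_diff hF γ y hy.1.2 (hA' _ hy.1).1
      (hA' _ hy.1).2).hasFDerivAt).hasFDerivWithinAt)
  simp_rw [hB, fiber_card hF γ (A ∩ D) hA'] at am ai
  have hnull : volume (FF γ e f '' (Psi ⁻¹' ((A \ D) ×ˢ Ioc (-π) π ×ˢ Ioo 0 1))) = 0 := by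
    apply null_image
    · exact box_null (measure_mono_null (fun t ht => ht.2) hDn) _
    · intro y hy
      obtain ⟨K, V, hV, h⟩ := FF_lip hF γ C hL y (hA _ hy.1.1).1 (hA _ hy.1.1).2
      exact ⟨K, V, mem_nhdsWithin_of_mem_nhds hV, h⟩
  have hae : (Metric.ball (0:E3) 1 \ {0}).indicator (cnt γ (A ∩ D)) =ᵐ[volume]
      (Metric.ball (0:E3) 1 \ {0}).indicator (cnt γ A) := by
    filter_upwards [measure_eq_zero_iff_ae_notMem.1 hnull] with x hx
    by_cases hxb : x ∈ Metric.ball (0:E3) 1 \ {0}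
    · rw [indicator_of_mem hxb, indicator_of_mem hxb, cnt, cnt]
      congr 2
      ext t
      constructor
      · rintro ⟨h1, h2⟩
        exact ⟨h1.1, h2⟩
      · rintro ⟨h1, h2⟩
        refine ⟨⟨h1, ?_⟩, h2⟩
        by_contra h3
        obtain ⟨y, e1, e2, e3⟩ := FF_mem hF γ (A \ D) (fun t ht => hA t ht.1) x hxb t ⟨h1, h3⟩ h2
        exact hx ⟨y, e1, e2⟩
    · rw [indicator_of_notMem hxb, indicator_of_notMem hxb]
  refine ⟨am.congr hae, ?_⟩
  rw [← lintegral_congr_ae hae, ai]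
  have hγm : Measurable γ := hL.continuous.measurable
  have hem : Measurable (fun t => e (γ t)) := hF.meas1.comp hγm
  have hfm : Measurable (fun t => f (γ t)) := hF.meas2.comp hγm
  have hdm : Measurable (deriv γ) := measurable_deriv γ
  have hG : Measurable (Function.uncurry fun t θ =>
      ENNReal.ofReal (|⟪deriv γ t, pt e f (γ t) θ⟫| / ‖γ t‖)) := by
    have : Measurable (fun z : ℝ × ℝ => pt e f (γ z.1) z.2) := by
      have g1 : Measurable (fun z : ℝ × ℝ => γ z.1) := hγm.comp measurable_fst
      have g2 : Measurable (fun z : ℝ × ℝ => e (γ z.1)) := hem.comp measurable_fst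
      have g3 : Measurable (fun z : ℝ × ℝ => f (γ z.1)) := hfm.comp measurable_fst
      have g4 : Measurable (fun z : ℝ × ℝ => ‖γ z.1‖) := g1.norm
      have g5 : Measurable (fun z : ℝ × ℝ => Real.cos z.2) := Real.measurable_cos.comp measurable_snd
      have g6 : Measurable (fun z : ℝ × ℝ => Real.sin z.2) := Real.measurable_sin.comp measurable_snd
      exact ((g4.pow_const 2).inv.smul g1).add (((((g4.pow_const 2).sub_const 1).sqrt).div g4).smul
        ((g5.smul g2).add (g6.smul g3)))
    have h2 : Measurable (fun z : ℝ × ℝ => ⟪deriv γ z.1, pt e f (γ z.1) z.2⟫) :=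
      (hdm.comp measurable_fst).inner this
    have h3 : Measurable (fun z : ℝ × ℝ => |⟪deriv γ z.1, pt e f (γ z.1) z.2⟫|) := by
      simpa [Real.norm_eq_abs] using h2.norm
    have h4 : Measurable (fun z : ℝ × ℝ => ‖γ z.1‖) := by fun_prop
    exact (h3.div h4).ennreal_ofReal
  have e1 := fub _ hG (A ∩ D) (Ioc (-π) π) (hAm.inter hDm) measurableSet_Ioc
  have e2 : (A ∩ D : Set ℝ) =ᵐ[volume] A := by
    refine inter_ae_eq_left_of_ae_eq_univ ?_
    exact ae_eq_univ.2 hDn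
  rw [setLIntegral_congr e2] at e1
  rw [← e1]
  refine setLIntegral_congr_fun hBm fun y hy => ?_
  simp only
  rw [FF_det hF γ y hy.1.2 (hA' _ hy.1).1 (hA' _ hy.1).2 hy.2.2.1, ENNReal.ofReal_mul (sq_nonneg _)]
/-- Inner integral of the formula. -/
def JJ (g v : E3) : ℝ := ∫ θ in (0:ℝ)..(2 * π), (1 / ‖g‖ ^ 2) *
    |Real.sqrt (‖g‖ ^ 2 - 1) * Real.sin (InnerProductGeometry.angle g v) * Real.cos θ +
      Real.cos (InnerProductGeometry.angle g v)|

theorem theta_int {U : Set E3} {e f : E3 → E3} (hF : IsFrame U e f) (g v : E3) (hg : g ∈ U)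
    (hg1 : 1 < ‖g‖) (hv : 0 < ‖v‖) :
    ∫⁻ θ in Ioc (-π) π, ENNReal.ofReal (|⟪v, pt e f g θ⟫| / ‖g‖)
      = ENNReal.ofReal (‖v‖ * JJ g v) := by
  have h0 : 0 < ‖g‖ := by linarith
  obtain ⟨c, hc⟩ : ∃ c, c = Real.cos (InnerProductGeometry.angle g v) := ⟨_, rfl⟩
  obtain ⟨s, hs⟩ : ∃ s, s = Real.sin (InnerProductGeometry.angle g v) := ⟨_, rfl⟩
  have hs0 : 0 ≤ s := by rw [hs]; exact InnerProductGeometry.sin_angle_nonneg g v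
  have hsc : s ^ 2 + c ^ 2 = 1 := by rw [hs, hc]; exact Real.sin_sq_add_cos_sq _
  have hgv : ⟪g, v⟫ = ‖g‖ * ‖v‖ * c := by
    rw [hc, InnerProductGeometry.cos_angle]; field_simp
  let z : ℂ := ⟨⟪e g, v⟫, ⟪f g, v⟫⟩
  have hz : ‖z‖ = ‖v‖ * s := by
    have h1 := expand_norm hF hg v
    rw [hgv] at h1
    have h2 : ‖z‖ ^ 2 = (‖v‖ * s) ^ 2 := by
      rw [← Complex.normSq_eq_norm_sq, Complex.normSq_mk]
      have h3 : (‖g‖ * ‖v‖ * c) ^ 2 / ‖g‖ ^ 2 = ‖v‖ ^ 2 * c ^ 2 := by field_simp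
      rw [h3] at h1
      linear_combination -h1 - ‖v‖ ^ 2 * hsc
    exact (pow_left_inj₀ (norm_nonneg _) (by positivity) two_ne_zero).1 h2
  have hze : ⟪v, e g⟫ = ‖v‖ * s * Real.cos z.arg := by
    rw [← hz, Complex.norm_mul_cos_arg, real_inner_comm]
  have hzf : ⟪v, f g⟫ = ‖v‖ * s * Real.sin z.arg := by
    rw [← hz, Complex.norm_mul_sin_arg, real_inner_comm]
  let P : ℝ → ℝ := fun θ => (1 / ‖g‖ ^ 2) * |Real.sqrt (‖g‖ ^ 2 - 1) * s * Real.cos θ + c|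
  have hP : ∀ θ, |⟪v, pt e f g θ⟫| / ‖g‖ = ‖v‖ * P (θ - z.arg) := by
    intro θ
    have h1 : ⟪v, pt e f g θ⟫ = ‖v‖ / ‖g‖ *
        (Real.sqrt (‖g‖ ^ 2 - 1) * s * Real.cos (θ - z.arg) + c) := by
      simp only [pt, inner_add_right, inner_smul_right, hze, hzf, real_inner_comm g v, hgv,
        Real.cos_sub]
      field_simp
      ring
    rw [h1, abs_mul, abs_of_pos (by positivity)]
    simp only [P]
    field_simp
  have hPc : Continuous P := by fun_prop
  have hPper : Function.Periodic P (2 * π) := by intro θ; simp [P]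
  have hP0 : ∀ θ, 0 ≤ P θ := fun θ => by positivity
  simp_rw [hP]
  rw [← ofReal_integral_eq_lintegral_ofReal]
  · congr 1
    rw [← intervalIntegral.integral_of_le (by linarith [Real.pi_pos]),
      intervalIntegral.integral_const_mul, intervalIntegral.integral_comp_sub_right P]
    congr 1
    have := hPper.intervalIntegral_add_eq (-π - z.arg) 0
    rw [zero_add] at this
    rw [JJ, ← hs, ← hc]
    refine Eq.trans ?_ this
    congr 1
    ring
  · have hc2 : Continuous (fun θ => ‖v‖ * P (θ - z.arg)) := by fun_prop
    exact hc2.integrableOn_Ioc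
  · filter_upwards with θ
    exact mul_nonneg hv.le (hP0 _)

theorem bad_null (γ : ℝ → E3) (C : ℝ≥0) (hL : LipschitzWith C γ) :
    volume {x : E3 | ∃ t, ‖γ t‖ = 1 ∧ ⟪γ t, x⟫ = ‖x‖} = 0 := by
  have h : volume ((fun y : E3 => y 2 • γ (y 0)) '' {y : E3 | y 1 = 0}) = 0 := by
    apply null_image
    · have : {y : E3 | y 1 = 0} = Psi ⁻¹' (univ ×ˢ ({0} ×ˢ univ)) := by
        ext y; simp [Psi]
      rw [this]
      apply Psi_mp.quasiMeasurePreserving.preimage_null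
      rw [Measure.volume_eq_prod, Measure.prod_prod, Measure.volume_eq_prod, Measure.prod_prod]
      simp
    · intro y _
      obtain ⟨K1, h1⟩ := lip_triple γ C hL
      have hs : ContDiffAt ℝ 1 (fun z : E3 × ℝ × ℝ => z.2.2 • z.1) (γ (y 0), y 1, y 2) := by
        fun_prop
      obtain ⟨K2, V, hV, h2⟩ := hs.exists_lipschitzOnWith
      refine ⟨K2 * K1, (fun y : E3 => (γ (y 0), y 1, y 2)) ⁻¹' V,
        mem_nhdsWithin_of_mem_nhds (h1.continuous.continuousAt.preimage_mem_nhds hV), ?_⟩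
      have h3 : LipschitzOnWith K1 (fun y : E3 => (γ (y 0), y 1, y 2))
        ((fun y : E3 => (γ (y 0), y 1, y 2)) ⁻¹' V) := h1.lipschitzOnWith
      have h4 := h2.comp h3 (mapsTo_preimage _ _)
      have h5 : (fun y : E3 => y 2 • γ (y 0)) = (fun z : E3 × ℝ × ℝ => z.2.2 • z.1) ∘
          (fun y : E3 => (γ (y 0), y 1, y 2)) := by
        funext y; rfl
      rw [h5]
      exact h4
  refine measure_mono_null ?_ h
  rintro x ⟨t, h1, h2⟩
  refine ⟨!₂[t, 0, ‖x‖], by simp, ?_⟩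
  have : ‖x‖ • γ t = x := by
    have h3 : ‖‖x‖ • γ t - x‖ ^ 2 = 0 := by
      rw [norm_sub_sq_real, norm_smul, inner_smul_left, h2, h1]
      simp
      ring
    exact sub_eq_zero.1 (norm_eq_zero.1 (pow_eq_zero_iff two_ne_zero |>.1 h3))
  simpa using this

theorem JJ_zero (γ : ℝ → E3) (hout : ∀ t, 1 ≤ ‖γ t‖) (t : ℝ) (hd : DifferentiableAt ℝ γ t)
    (ht : ‖γ t‖ = 1) : JJ (γ t) (deriv γ t) = 0 := by
  have h1 := hd.hasDerivAt.norm_sq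
  have hmin : IsLocalMin (fun s => ‖γ s‖ ^ 2) t := by
    filter_upwards with s
    rw [ht]
    nlinarith [hout s]
  have h2 := hmin.hasDerivAt_eq_zero h1
  have h3 : ⟪γ t, deriv γ t⟫ = 0 := by linarith
  rw [JJ, InnerProductGeometry.cos_angle, h3, ht]
  simp

theorem JJ_meas {g v : ℝ → E3} (hg : Measurable g) (hv : Measurable v) :
    StronglyMeasurable (fun t => JJ (g t) (v t)) := by
  have h1 : Measurable (fun t => InnerProductGeometry.angle (g t) (v t)) :=
    Real.measurable_arccos.comp ((hg.inner hv).div (hg.norm.mul hv.norm))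
  have h2 : Measurable (fun z : ℝ × ℝ => (1 / ‖g z.1‖ ^ 2) *
    |Real.sqrt (‖g z.1‖ ^ 2 - 1) * Real.sin (InnerProductGeometry.angle (g z.1) (v z.1)) *
      Real.cos z.2 + Real.cos (InnerProductGeometry.angle (g z.1) (v z.1))|) := by
    have h3 : Measurable (fun z : ℝ × ℝ => InnerProductGeometry.angle (g z.1) (v z.1)) :=
      h1.comp measurable_fst
    have h4 : Measurable (fun z : ℝ × ℝ => ‖g z.1‖) := (hg.comp measurable_fst).norm
    have h5 : Measurable (fun z : ℝ × ℝ => Real.sqrt (‖g z.1‖ ^ 2 - 1) *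
        Real.sin (InnerProductGeometry.angle (g z.1) (v z.1)) *
      Real.cos z.2 + Real.cos (InnerProductGeometry.angle (g z.1) (v z.1))) := by
      have h6 : Measurable (fun z : ℝ × ℝ => Real.cos z.2) :=
        Real.measurable_cos.comp measurable_snd
      exact ((((h4.pow_const 2).sub_const 1).sqrt.mul (Real.measurable_sin.comp h3)).mul h6).add
        (Real.measurable_cos.comp h3)
    refine ((h4.pow_const 2).const_div 1).mul ?_
    simpa [Real.norm_eq_abs] using h5.norm
  have h3 := h2.stronglyMeasurable.integral_prod_right' (ν := volume.restrict (Ioc 0 (2 * π)))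
  convert h3 using 2 with t
  rw [JJ, intervalIntegral.integral_of_le (by positivity)]

theorem JJ_nonneg (g v : E3) : 0 ≤ JJ g v :=
  intervalIntegral.integral_nonneg (by positivity) fun θ _ => by positivity

theorem JJ_bound (g v : E3) (hg : 1 ≤ ‖g‖) : ‖JJ g v‖ ≤ 2 * |2 * π - 0| := by
  refine intervalIntegral.norm_integral_le_of_norm_le_const fun θ _ => ?_
  rw [norm_mul, Real.norm_eq_abs, Real.norm_eq_abs, abs_abs, abs_of_pos (by positivity)]
  have h1 : √(‖g‖ ^ 2 - 1) ≤ ‖g‖ ^ 2 := by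
    rw [Real.sqrt_le_left (by positivity)]
    nlinarith [sq_nonneg (‖g‖ ^ 2 - 1)]
  have h2 := Real.abs_sin_le_one (InnerProductGeometry.angle g v)
  have h3 := Real.abs_cos_le_one (InnerProductGeometry.angle g v)
  have h4 := Real.abs_cos_le_one θ
  have h5 : |√(‖g‖ ^ 2 - 1) * Real.sin (InnerProductGeometry.angle g v) * Real.cos θ +
      Real.cos (InnerProductGeometry.angle g v)| ≤ ‖g‖ ^ 2 * 1 * 1 + 1 := by
    refine (abs_add_le _ _).trans (add_le_add ?_ h3)
    rw [abs_mul, abs_mul, abs_of_nonneg (Real.sqrt_nonneg _)]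
    gcongr
  rw [one_div, inv_mul_le_iff₀ (by positivity)]
  nlinarith

theorem global_formula (γ : ℝ → E3) (C : ℝ≥0) (hC : 0 < C) (hL : LipschitzWith C γ)
    (hout : ∀ t, 1 ≤ ‖γ t‖) (a b : ℝ)
    (hsp : ∀ᵐ t ∂(volume.restrict (Icc a b)), ‖deriv γ t‖ = C) :
    horizon a b γ = ∫⁻ t in Ioc a b, ENNReal.ofReal (C * JJ (γ t) (deriv γ t)) := by
  have hγm : Measurable γ := hL.continuous.measurable
  have mc : ∀ m, Measurable (fun t => γ t m) := fun m =>
    (contDiff_coord m).continuous.measurable.comp hγm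
  have hsp' : ∀ᵐ t, t ∈ Icc a b → ‖deriv γ t‖ = C :=
    (ae_restrict_iff' measurableSet_Icc).1 hsp
  obtain ⟨e1, f1, hF1⟩ := frame1
  obtain ⟨e2, f2, hF2⟩ := frame2
  set B : Set E3 := Metric.ball (0:E3) 1 \ {0} with hB
  set W : Set ℝ := {t | 1 < ‖γ t‖} with hW
  set V : Set ℝ := {t | γ t 0 ^ 2 + γ t 1 ^ 2 = 0} with hV
  have hWm : MeasurableSet W := measurableSet_lt measurable_const hγm.norm
  have hVm : MeasurableSet V :=
    measurableSet_eq_fun (((mc 0).pow_const 2).add ((mc 1).pow_const 2)) measurable_const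
  have hA1 : ∀ t ∈ (Ico a b ∩ W) \ V, γ t ∈ {x : E3 | x 0 ^ 2 + x 1 ^ 2 ≠ 0} ∧ 1 < ‖γ t‖ :=
    fun t ht => ⟨ht.2, ht.1.2⟩
  have hA2 : ∀ t ∈ (Ico a b ∩ W) ∩ V, γ t ∈ {x : E3 | x 1 ^ 2 + x 2 ^ 2 ≠ 0} ∧ 1 < ‖γ t‖ := by
    rintro t ⟨⟨h1, h2⟩, h3⟩
    refine ⟨?_, h2⟩
    intro h4
    have h5 : (1:ℝ) < ‖γ t‖ := h2
    have h6 : γ t 0 ^ 2 + γ t 1 ^ 2 = 0 := h3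
    have h7 : γ t 1 ^ 2 + γ t 2 ^ 2 = 0 := h4
    have h8 := inner3 (γ t) (γ t)
    rw [real_inner_self_eq_norm_sq] at h8
    nlinarith [sq_nonneg (γ t 0), sq_nonneg (γ t 1), sq_nonneg (γ t 2)]
  have hm : MeasurableSet (Ico a b ∩ W) := measurableSet_Ico.inter hWm
  obtain ⟨m1, i1⟩ := piece hF1 γ C hL _ (hm.diff hVm) hA1
  obtain ⟨m2, i2⟩ := piece hF2 γ C hL _ (hm.inter hVm) hA2
  have j1 : ∫⁻ t in (Ico a b ∩ W) \ V,
      ∫⁻ θ in Ioc (-π) π, ENNReal.ofReal (|⟪deriv γ t, pt e1 f1 (γ t) θ⟫| / ‖γ t‖)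
      = ∫⁻ t in (Ico a b ∩ W) \ V, ENNReal.ofReal (C * JJ (γ t) (deriv γ t)) := by
    refine setLIntegral_congr_fun_ae (hm.diff hVm) ?_
    filter_upwards [hsp'] with t ht hts
    have h1 := ht (Ico_subset_Icc_self hts.1.1)
    rw [theta_int hF1 _ _ (hA1 t hts).1 (hA1 t hts).2 (by rw [h1]; exact_mod_cast hC), h1]
  have j2 : ∫⁻ t in (Ico a b ∩ W) ∩ V,
      ∫⁻ θ in Ioc (-π) π, ENNReal.ofReal (|⟪deriv γ t, pt e2 f2 (γ t) θ⟫| / ‖γ t‖)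
      = ∫⁻ t in (Ico a b ∩ W) ∩ V, ENNReal.ofReal (C * JJ (γ t) (deriv γ t)) := by
    refine setLIntegral_congr_fun_ae (hm.inter hVm) ?_
    filter_upwards [hsp'] with t ht hts
    have h1 := ht (Ico_subset_Icc_self hts.1.1)
    rw [theta_int hF2 _ _ (hA2 t hts).1 (hA2 t hts).2 (by rw [h1]; exact_mod_cast hC), h1]
  rw [j1] at i1
  rw [j2] at i2
  have hae : (fun x => B.indicator (cnt γ ((Ico a b ∩ W) ∩ V)) x +
      B.indicator (cnt γ ((Ico a b ∩ W) \ V)) x) =ᵐ[volume]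
      B.indicator (cnt γ (Ico a b)) := by
    filter_upwards [measure_eq_zero_iff_ae_notMem.1 (bad_null γ C hL)] with x hx
    by_cases hxb : x ∈ B
    · rw [indicator_of_mem hxb, indicator_of_mem hxb, indicator_of_mem hxb, cnt, cnt, cnt,
        ← encard_union_ennreal]
      · congr 2
        rw [← union_inter_distrib_right, inter_union_sdiff]
        ext t
        constructor
        · rintro ⟨h1, h2⟩
          exact ⟨h1.1, h2⟩
        · rintro ⟨h1, h2⟩
          refine ⟨⟨h1, ?_⟩, h2⟩
          refine lt_of_le_of_ne (hout t) fun h => hx ⟨t, h.symm, h2⟩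
      · exact (disjoint_sdiff_inter.symm).mono inter_subset_left inter_subset_left
    · rw [indicator_of_notMem hxb, indicator_of_notMem hxb, indicator_of_notMem hxb, add_zero]
  have hhor : horizon a b γ = ∫⁻ p : Metric.sphere (0 : E3) 1, cnt γ (Ico a b) p
      ∂((volume : Measure E3).toSphere) := by
    refine lintegral_congr fun p => ?_
    have hp : ‖(p : E3)‖ = 1 := by simp
    rw [cnt, hp]
    rfl
  rw [hhor, sphere_lintegral]
  · rw [← lintegral_congr_ae hae, lintegral_add_left' m2, i1, i2, ← mul_add,
      lintegral_inter_add_sdiff _ _ hVm, ← mul_assoc, ENNReal.mul_inv_cancel (by simp) (by simp),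
      one_mul]
    rw [← Measure.restrict_congr_set Ico_ae_eq_Ioc, ← lintegral_inter_add_sdiff _ (Ico a b) hWm]
    have hz : ∫⁻ t in Ico a b \ W, ENNReal.ofReal (C * JJ (γ t) (deriv γ t)) = 0 := by
      rw [setLIntegral_congr_fun_ae (g := fun _ => 0) (measurableSet_Ico.diff hWm)]
      · simp
      · filter_upwards [hL.ae_differentiableAt] with t hd ht
        rw [JJ_zero γ hout t hd (le_antisymm (not_lt.1 ht.2) (hout t))]
        simp
    rw [hz, add_zero]
  · intro r hr x
    rw [cnt, cnt]
    congr 3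
    ext t
    simp only [mem_ofPred_eq, inner_smul_right, norm_smul, Real.norm_of_nonneg hr.le]
    exact mul_right_inj' hr.ne'
  · exact (m2.add m1).congr hae
theorem lip_of_speed (a b : ℝ) (γ : ℝ → E3) (C : ℝ≥0)
    (hspeed : HasConstantSpeedOnWith γ (Icc a b) C) : LipschitzOnWith C γ (Icc a b) := by
  have key : ∀ x ∈ Icc a b, ∀ y ∈ Icc a b, x ≤ y → edist (γ x) (γ y) ≤ C * edist x y := by
    intro x hx y hy hxy
    have h1 := eVariationOn.edist_le γ (s := Icc a b ∩ Icc x y) ⟨hx, left_mem_Icc.2 hxy⟩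
      ⟨hy, right_mem_Icc.2 hxy⟩
    rw [hspeed hx hy] at h1
    refine h1.trans (le_of_eq ?_)
    rw [ENNReal.ofReal_mul C.coe_nonneg, ENNReal.ofReal_coe_nnreal, edist_comm, edist_dist,
      Real.dist_eq, abs_of_nonneg (by linarith)]
  intro x hx y hy
  rcases le_total x y with h | h
  · exact key x hx y hy h
  · rw [edist_comm, edist_comm x y]
    exact key y hy x hx h

theorem horizon_eq_aux
    (a b : ℝ) (hab : a < b) (γ : ℝ → E3) (C : ℝ≥0) (hC : 0 < C)
    (hspeed : HasConstantSpeedOnWith γ (Set.Icc a b) C)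
    (hout : ∀ t ∈ Set.Icc a b, 1 ≤ ‖γ t‖) :
    horizon a b γ = ENNReal.ofReal ((C : ℝ) *
        ∫ t in a..b, JJ (γ t) (derivWithin γ (Icc a b) t)) := by
  have hLo := lip_of_speed a b γ C hspeed
  set g : ℝ → E3 := fun t => γ (projIcc a b hab.le t) with hg
  have hgeq : ∀ t ∈ Icc a b, g t = γ t := fun t ht => by simp [hg, projIcc_of_mem hab.le ht]
  have hLg : LipschitzWith C g := by
    have h1 : LipschitzWith C ((Icc a b).domRestrict γ) := hLo.to_restrict
    have h2 := h1.comp (LipschitzWith.projIcc hab.le)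
    rw [mul_one] at h2
    exact h2
  have hspg : HasConstantSpeedOnWith g (Icc a b) C := by
    intro x hx y hy
    rw [← hspeed hx hy]
    exact eVariationOn.eq_of_eqOn fun t ht => hgeq t ht.1
  have houtg : ∀ t, 1 ≤ ‖g t‖ := fun t => hout _ (projIcc a b hab.le t).2
  have hae := speed_ae a b hab g C hLg hspg
  have h1 := global_formula g C hC hLg houtg a b hae
  have h2 : horizon a b γ = horizon a b g := by
    refine lintegral_congr fun p => ?_
    congr 2
    ext t
    constructor
    · rintro ⟨h1, h2⟩
      exact ⟨h1, by rw [hgeq t (Ico_subset_Icc_self h1)]; exact h2⟩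
    · rintro ⟨h1, h2⟩
      exact ⟨h1, by rw [← hgeq t (Ico_subset_Icc_self h1)]; exact h2⟩
  have h3 : ∫ t in a..b, JJ (γ t) (derivWithin γ (Icc a b) t)
      = ∫ t in Ioc a b, JJ (g t) (deriv g t) := by
    rw [intervalIntegral.integral_of_le hab.le, integral_Ioc_eq_integral_Ioo,
      integral_Ioc_eq_integral_Ioo]
    refine setIntegral_congr_fun measurableSet_Ioo fun t ht => ?_
    have hn : Icc a b ∈ nhds t := Icc_mem_nhds ht.1 ht.2
    have h4 : deriv g t = derivWithin γ (Icc a b) t := by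
      rw [derivWithin_of_mem_nhds hn]
      refine Filter.EventuallyEq.deriv_eq ?_
      filter_upwards [hn] with s hs using hgeq s hs
    rw [h4, hgeq t (Ioo_subset_Icc_self ht)]
  rw [h2, h1, h3, ← integral_const_mul, ofReal_integral_eq_lintegral_ofReal]
  · refine Integrable.const_mul ?_ _
    have hm := JJ_meas hLg.continuous.measurable (measurable_deriv g)
    refine Measure.integrableOn_of_bounded (M := 2 * |2 * π - 0|) (by simp)
      hm.aestronglyMeasurable ?_
    filter_upwards with t
    exact JJ_bound _ _ (houtg t)
  · filter_upwards with t
    exact mul_nonneg C.coe_nonneg (JJ_nonneg _ _)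

/-- **Integral formula for the horizon/efficiency** of a constant speed curve lying
outside the unit sphere. -/
theorem horizon_eq_integral
    (a b : ℝ) (hab : a < b) (γ : ℝ → E3) (C : ℝ≥0) (hC : 0 < C)
    (hcont : ContinuousOn γ (Set.Icc a b))
    (hspeed : HasConstantSpeedOnWith γ (Set.Icc a b) C)
    (hout : ∀ t ∈ Set.Icc a b, 1 ≤ ‖γ t‖) :
    horizon a b γ = ENNReal.ofReal ((C : ℝ) *
        ∫ t in a..b, ∫ θ in (0:ℝ)..(2 * π),
          (1 / ‖γ t‖ ^ 2) *
            |Real.sqrt (‖γ t‖ ^ 2 - 1) * Real.sin (alpha a b γ t) * Real.cos θ +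
              Real.cos (alpha a b γ t)|) ∧
    (horizon a b γ).toReal / (eVariationOn γ (Set.Icc a b)).toReal =
      (1 / (b - a)) *
        ∫ t in a..b, ∫ θ in (0:ℝ)..(2 * π),
          (1 / ‖γ t‖ ^ 2) *
            |Real.sqrt (‖γ t‖ ^ 2 - 1) * Real.sin (alpha a b γ t) * Real.cos θ +
              Real.cos (alpha a b γ t)| := by
  have h1 := horizon_eq_aux a b hab γ C hC hspeed hout
  have h2 : (eVariationOn γ (Set.Icc a b)).toReal = C * (b - a) := by
    have h3 := hspeed (left_mem_Icc.2 hab.le) (right_mem_Icc.2 hab.le)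
    rw [inter_self] at h3
    rw [h3, ENNReal.toReal_ofReal]
    have := sub_pos.2 hab
    positivity
  have h0 : 0 ≤ ∫ t in a..b, JJ (γ t) (derivWithin γ (Icc a b) t) :=
    intervalIntegral.integral_nonneg hab.le fun t _ => JJ_nonneg _ _
  have hC' : (0:ℝ) < C := by exact_mod_cast hC
  have hb := sub_pos.2 hab
  change horizon a b γ = ENNReal.ofReal ((C : ℝ) *
        ∫ t in a..b, JJ (γ t) (derivWithin γ (Icc a b) t)) ∧
    (horizon a b γ).toReal / (eVariationOn γ (Set.Icc a b)).toReal =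
      (1 / (b - a)) * ∫ t in a..b, JJ (γ t) (derivWithin γ (Icc a b) t)
  refine ⟨h1, ?_⟩
  rw [h1, h2, ENNReal.toReal_ofReal (by positivity)]
  field_simp
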